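/- Let B be a real Banach space with dual B* and let C be a nonempty closed subset of B. Let φ ∈ B* and z ∈ C. If there exists jz ∈ J(z) such that ⟨φ − jz, z − y⟩ ≥ 0 for all y ∈ C, then z ∈ π_C(φ). -/

import Mathlib

open Set Filter

noncomputable section

/-- The normalized duality map `J x = {φ : ⟨φ,x⟩ = ‖x‖² and ‖φ‖ = ‖x‖}`. -/
def dualityMap {B : Type*} [NormedAddCommGroup B] [NormedSpace ℝ B] (x : B) :
    Set (B →L[ℝ] ℝ) :=
  {φ | φ x = ‖x‖ ^ 2 ∧ ‖φ‖ = ‖x‖}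

/-- The Lyapunov functional `V(φ,x) = ‖φ‖² - 2⟨φ,x⟩ + ‖x‖²`. -/
def lyapV {B : Type*} [NormedAddCommGroup B] [NormedSpace ℝ B] (φ : B →L[ℝ] ℝ) (x : B) : ℝ :=
  ‖φ‖ ^ 2 - 2 * φ x + ‖x‖ ^ 2

/-- The generalized projection: the set of minimizers of `V(φ, ·)` over `C`. -/
def genProj {B : Type*} [NormedAddCommGroup B] [NormedSpace ℝ B] (C : Set B)
    (φ : B →L[ℝ] ℝ) : Set B :=
  {u | u ∈ C ∧ ∀ y ∈ C, lyapV φ u ≤ lyapV φ y}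

/-- The generalized metric projection `Π_C x = ⋃_{jx ∈ J x} π_C (jx)`. -/
def genMetricProj {B : Type*} [NormedAddCommGroup B] [NormedSpace ℝ B] (C : Set B) (x : B) :
    Set B :=
  ⋃ φ ∈ dualityMap x, genProj C φ

/-- The metric projection: the set of nearest points to `x` in `C`. -/
def metricProj {B : Type*} [NormedAddCommGroup B] [NormedSpace ℝ B] (C : Set B) (x : B) :
    Set B :=
  {u | u ∈ C ∧ ∀ y ∈ C, ‖x - u‖ ≤ ‖x - y‖}

/-- The set of generalized identical points of `x`. -/
def genIdentical {B : Type*} [NormedAddCommGroup B] [NormedSpace ℝ B] (x : B) : Set B :=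
  {y | (dualityMap x ∩ dualityMap y).Nonempty}

/-
The Lyapunov functional is nonnegative and vanishes exactly on the graph of the duality map, so a
point `z` of `C` minimizes `V(jz, ·)` over `C` for every `jz ∈ J z`. Replacing `jz` by `φ` changes
the increment `V(·, y) - V(·, z)` by `2 ⟨φ - jz, z - y⟩`, which is nonnegative by hypothesis, so
`z` still minimizes `V(φ, ·)`.
-/

section LyapunovFunctional

variable {B : Type*} [NormedAddCommGroup B] [NormedSpace ℝ B]

theorem sq_norm_sub_norm_le_lyapV (φ : B →L[ℝ] ℝ) (x : B) : (‖φ‖ - ‖x‖) ^ 2 ≤ lyapV φ x := by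
  have apply_le : φ x ≤ ‖φ‖ * ‖x‖ := (le_abs_self _).trans (φ.le_opNorm x)
  unfold lyapV
  linarith [sub_sq ‖φ‖ ‖x‖]

theorem lyapV_nonneg (φ : B →L[ℝ] ℝ) (x : B) : 0 ≤ lyapV φ x :=
  (sq_nonneg _).trans (sq_norm_sub_norm_le_lyapV φ x)

theorem lyapV_eq_zero_iff_mem_dualityMap {φ : B →L[ℝ] ℝ} {x : B} :
    lyapV φ x = 0 ↔ φ ∈ dualityMap x := by
  constructor
  · intro hV
    have sq_le_zero : (‖φ‖ - ‖x‖) ^ 2 ≤ 0 := hV ▸ sq_norm_sub_norm_le_lyapV φ x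
    have norm_eq : ‖φ‖ = ‖x‖ := sub_eq_zero.mp ((sq_nonpos_iff _).mp sq_le_zero)
    refine ⟨?_, norm_eq⟩
    rw [lyapV, norm_eq] at hV
    linarith
  · rintro ⟨apply_eq, norm_eq⟩
    rw [lyapV, apply_eq, norm_eq]
    ring

theorem lyapV_sub_lyapV (φ ψ : B →L[ℝ] ℝ) (x y : B) :
    lyapV φ y - lyapV φ x = lyapV ψ y - lyapV ψ x + 2 * (φ - ψ) (x - y) := by
  simp only [lyapV, sub_apply, map_sub]
  ring

end LyapunovFunctional

section GeneralizedProjection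

variable {B : Type*} [NormedAddCommGroup B] [NormedSpace ℝ B] {C : Set B} {φ ψ : B →L[ℝ] ℝ} {z : B}

theorem mem_genProj_of_mem_dualityMap (hz : z ∈ C) (hφ : φ ∈ dualityMap z) : z ∈ genProj C φ :=
  ⟨hz, fun y _ => (lyapV_eq_zero_iff_mem_dualityMap.mpr hφ).trans_le (lyapV_nonneg φ y)⟩

theorem mem_genProj_of_forall_sub_apply_sub_nonneg (hz : z ∈ genProj C ψ)
    (h : ∀ y ∈ C, 0 ≤ (φ - ψ) (z - y)) : z ∈ genProj C φ := by
  obtain ⟨hzC, hmin⟩ := hz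
  exact ⟨hzC, fun y hy => by linarith [lyapV_sub_lyapV φ ψ z y, hmin y hy, h y hy]⟩

end GeneralizedProjection

theorem statement_5_general {B : Type*} [NormedAddCommGroup B] [NormedSpace ℝ B]
    (C : Set B) (φ : B →L[ℝ] ℝ) (z : B) (hz : z ∈ C)
    (h : ∃ jz ∈ dualityMap z, ∀ y ∈ C, 0 ≤ (φ - jz) (z - y)) :
    z ∈ genProj C φ := by
  obtain ⟨jz, hjz, hvar⟩ := h
  exact mem_genProj_of_forall_sub_apply_sub_nonneg (mem_genProj_of_mem_dualityMap hz hjz) hvar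

theorem statement_5 {B : Type*} [NormedAddCommGroup B] [NormedSpace ℝ B] [CompleteSpace B]
    (C : Set B) (hC : C.Nonempty) (hclosed : IsClosed C)
    (φ : B →L[ℝ] ℝ) (z : B) (hz : z ∈ C)
    (h : ∃ jz ∈ dualityMap z, ∀ y ∈ C, 0 ≤ (φ - jz) (z - y)) :
    z ∈ genProj C φ :=
  statement_5_general C φ z hz h
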